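/- Let the gain L ∈ ℝ^{m×n} be admissible, let P be the solution of the stochastic Lyapunov equation P = 𝒯_L^*(P) + Q + Lᵀ R L, let Σ_0 be any symmetric positive semidefinite n×n matrix, and let Σ_{k+1} = 𝒯_L(Σ_k) + D be the closed-loop covariance recursion. Then the average expected cost equals tr(P D); that is, lim_{N→∞} (1/N) Σ_{k=0}^{N−1} tr((Q + Lᵀ R L) Σ_k) = tr(P D). -/

import Mathlib

open Matrix Filter Topology

/-- The sandwich map `X ↦ M * X * Mᵀ` as a linear endomorphism of `n × n` real matrices. -/
noncomputable def sandwich {n : ℕ} (M : Matrix (Fin n) (Fin n) ℝ) :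
    Module.End ℝ (Matrix (Fin n) (Fin n) ℝ) :=
  (LinearMap.mulLeft ℝ M).comp (LinearMap.mulRight ℝ Mᵀ)

/-- The closed-loop covariance operator
`𝒯_L(X) = (A+BL) X (A+BL)ᵀ + Σᵢ ᾱᵢ Aᵢ X Aᵢᵀ + Σⱼ β̄ⱼ (BⱼL) X (BⱼL)ᵀ`. -/
noncomputable def calT {n m p q : ℕ}
    (A : Matrix (Fin n) (Fin n) ℝ) (A' : Fin p → Matrix (Fin n) (Fin n) ℝ)
    (B : Matrix (Fin n) (Fin m) ℝ) (B' : Fin q → Matrix (Fin n) (Fin m) ℝ)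
    (al : Fin p → ℝ) (be : Fin q → ℝ) (L : Matrix (Fin m) (Fin n) ℝ) :
    Module.End ℝ (Matrix (Fin n) (Fin n) ℝ) :=
  sandwich (A + B * L) + ∑ i, al i • sandwich (A' i) + ∑ j, be j • sandwich (B' j * L)

/-- The (trace-)adjoint operator
`𝒯_L^*(P) = (A+BL)ᵀ P (A+BL) + Σᵢ ᾱᵢ Aᵢᵀ P Aᵢ + Σⱼ β̄ⱼ Lᵀ Bⱼᵀ P Bⱼ L`. -/
noncomputable def calTstar {n m p q : ℕ}
    (A : Matrix (Fin n) (Fin n) ℝ) (A' : Fin p → Matrix (Fin n) (Fin n) ℝ)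
    (B : Matrix (Fin n) (Fin m) ℝ) (B' : Fin q → Matrix (Fin n) (Fin m) ℝ)
    (al : Fin p → ℝ) (be : Fin q → ℝ) (L : Matrix (Fin m) (Fin n) ℝ) :
    Module.End ℝ (Matrix (Fin n) (Fin n) ℝ) :=
  sandwich (A + B * L)ᵀ + ∑ i, al i • sandwich (A' i)ᵀ + ∑ j, be j • sandwich (B' j * L)ᵀ

/-- A gain `L` is admissible if the spectral radius of `𝒯_L`, as a linear endomorphism of
the space of `n × n` real matrices, is strictly less than `1`. -/
noncomputable def Admissible {n m p q : ℕ}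
    (A : Matrix (Fin n) (Fin n) ℝ) (A' : Fin p → Matrix (Fin n) (Fin n) ℝ)
    (B : Matrix (Fin n) (Fin m) ℝ) (B' : Fin q → Matrix (Fin n) (Fin m) ℝ)
    (al : Fin p → ℝ) (be : Fin q → ℝ) (L : Matrix (Fin m) (Fin n) ℝ) : Prop :=
  spectralRadius ℝ (calT A A' B B' al be L) < 1

def QPos {n : ℕ} (X : Matrix (Fin n) (Fin n) ℝ) : Prop := ∀ v : Fin n → ℝ, 0 ≤ v ⬝ᵥ (X *ᵥ v)

theorem qf_bound {n : ℕ} (Y : Matrix (Fin n) (Fin n) ℝ) (v : Fin n → ℝ) :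
    |v ⬝ᵥ (Y *ᵥ v)| ≤ (∑ i, ∑ j, |Y i j|) * (v ⬝ᵥ v) := by
  simp only [dotProduct, mulVec, Finset.mul_sum]
  have hv : ∀ i, v i * v i ≤ ∑ i, v i * v i := fun i =>
    Finset.single_le_sum (f := fun i => v i * v i) (fun j _ => mul_self_nonneg _)
      (Finset.mem_univ i)
  rw [← Finset.mul_sum, Finset.sum_mul]
  refine (Finset.abs_sum_le_sum_abs _ _).trans (Finset.sum_le_sum fun i _ => ?_)
  rw [Finset.sum_mul]
  refine (Finset.abs_sum_le_sum_abs _ _).trans (Finset.sum_le_sum fun j _ => ?_)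
  have h1 : |v i * (Y i j * v j)| = |Y i j| * (|v i| * |v j|) := by
    rw [abs_mul, abs_mul]; ring
  rw [h1]
  refine mul_le_mul_of_nonneg_left ?_ (abs_nonneg _)
  have h2 := hv i
  have h3 := hv j
  have h4 := two_mul_le_add_sq |v i| |v j|
  rw [sq_abs, sq_abs] at h4
  nlinarith

theorem exists_delta {n : ℕ} (D : Matrix (Fin n) (Fin n) ℝ) (hD : D.PosDef) :
    ∃ δ > 0, ∀ v : Fin n → ℝ, δ * (v ⬝ᵥ v) ≤ v ⬝ᵥ (D *ᵥ v) := by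
  have hDu : IsUnit D := hD.isUnit
  have hdp : ∀ v : Fin n → ℝ, v ≠ 0 → 0 < v ⬝ᵥ (D *ᵥ v) := fun v hv => by
    simpa using hD.dotProduct_mulVec_pos hv
  let K : Set (Fin n → ℝ) := {v | v ⬝ᵥ v = 1}
  have hcont : Continuous fun v : Fin n → ℝ => v ⬝ᵥ (D *ᵥ v) := by
    simp only [dotProduct, mulVec]; fun_prop
  have hK : IsCompact K := by
    apply Metric.isCompact_of_isClosed_isBounded
    · refine isClosed_eq ?_ continuous_const
      simp only [dotProduct]; fun_prop
    · refine (Metric.isBounded_closedBall (x := (0 : Fin n → ℝ)) (r := 1)).subset ?_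
      intro v hv
      rw [mem_closedBall_zero_iff, pi_norm_le_iff_of_nonneg zero_le_one]
      intro i
      have : v i * v i ≤ 1 := by
        have hv' : ∑ i, v i * v i = 1 := hv
        rw [← hv']
        exact Finset.single_le_sum (f := fun i => v i * v i) (fun j _ => mul_self_nonneg _)
          (Finset.mem_univ i)
      rw [Real.norm_eq_abs]
      exact abs_le_one_iff_mul_self_le_one.2 this
  have hsc : ∀ δ : ℝ, (∀ v ∈ K, δ ≤ v ⬝ᵥ (D *ᵥ v)) →
      ∀ v : Fin n → ℝ, δ * (v ⬝ᵥ v) ≤ v ⬝ᵥ (D *ᵥ v) := by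
    intro δ h v
    by_cases hv : v = 0
    · simp [hv]
    have hpos : 0 < v ⬝ᵥ v := by
      have h0 : 0 ≤ v ⬝ᵥ v := Finset.sum_nonneg fun i _ => mul_self_nonneg _
      exact lt_of_le_of_ne h0 (fun h => hv (dotProduct_self_eq_zero.1 h.symm))
    set s := Real.sqrt (v ⬝ᵥ v) with hs
    have hss : s * s = v ⬝ᵥ v := Real.mul_self_sqrt hpos.le
    have hs0 : 0 < s := Real.sqrt_pos.2 hpos
    have hm : (s⁻¹ • v) ∈ K := by
      change (s⁻¹ • v) ⬝ᵥ (s⁻¹ • v) = 1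
      rw [smul_dotProduct, dotProduct_smul, ← hss, smul_eq_mul, smul_eq_mul]
      field_simp
    have := h _ hm
    rw [mulVec_smul, smul_dotProduct, dotProduct_smul, smul_eq_mul, smul_eq_mul] at this
    rw [← hss]
    calc δ * (s * s) ≤ (s⁻¹ * (s⁻¹ * v ⬝ᵥ D *ᵥ v)) * (s * s) := by gcongr
      _ = _ := by field_simp
  rcases K.eq_empty_or_nonempty with hE | hN
  · exact ⟨1, one_pos, hsc 1 (by simp [hE])⟩
  · obtain ⟨v, hv, hmin⟩ := hK.exists_isMinOn hN hcont.continuousOn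
    refine ⟨v ⬝ᵥ (D *ᵥ v), hdp v ?_, hsc _ fun w hw => hmin hw⟩
    rintro rfl
    simp [K] at hv

theorem exists_curve {n : ℕ} (T : Module.End ℝ (Matrix (Fin n) (Fin n) ℝ))
    (hu : ∀ t ∈ Set.Icc (0 : ℝ) 1, IsUnit (1 - t • T))
    (D : Matrix (Fin n) (Fin n) ℝ) :
    ∃ X : ℝ → Matrix (Fin n) (Fin n) ℝ, ContinuousOn X (Set.Icc 0 1) ∧
      ∀ t ∈ Set.Icc (0 : ℝ) 1, X t = t • T (X t) + D := by
  obtain ⟨φ⟩ : Nonempty (Module.End ℝ (Matrix (Fin n) (Fin n) ℝ) ≃ₐ[ℝ]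
      Matrix (Fin n × Fin n) (Fin n × Fin n) ℝ) :=
    ⟨LinearMap.toMatrixAlgEquiv (Matrix.stdBasis ℝ (Fin n) (Fin n))⟩
  let M : ℝ → Matrix (Fin n × Fin n) (Fin n × Fin n) ℝ := fun t => 1 - t • φ T
  have hMφ : ∀ t, M t = φ (1 - t • T) := fun t => by simp [M]
  have hdet : ∀ t ∈ Set.Icc (0 : ℝ) 1, IsUnit (M t).det := fun t ht => by
    rw [← Matrix.isUnit_iff_isUnit_det, hMφ]
    exact (hu t ht).map φ
  have hMc : Continuous M := by simp only [M]; fun_prop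
  have hMi : ContinuousOn (fun t => (M t)⁻¹) (Set.Icc 0 1) := by
    simp only [Matrix.inv_def, Ring.inverse_eq_inv']
    refine ContinuousOn.smul (ContinuousOn.inv₀ hMc.matrix_det.continuousOn ?_)
      hMc.matrix_adjugate.continuousOn
    exact fun t ht => (hdet t ht).ne_zero
  let ev : Matrix (Fin n × Fin n) (Fin n × Fin n) ℝ →ₗ[ℝ] Matrix (Fin n) (Fin n) ℝ :=
    (LinearMap.applyₗ D).comp φ.symm.toLinearMap
  let X : ℝ → Matrix (Fin n) (Fin n) ℝ := fun t => φ.symm ((M t)⁻¹) D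
  have hXc : ContinuousOn X (Set.Icc 0 1) :=
    (LinearMap.continuous_of_finiteDimensional ev).comp_continuousOn hMi
  have hX : ∀ t ∈ Set.Icc (0 : ℝ) 1, X t = t • T (X t) + D := by
    intro t ht
    have h1 : φ.symm (M t) * φ.symm ((M t)⁻¹) = 1 := by
      rw [← map_mul, Matrix.mul_nonsing_inv _ (hdet t ht), map_one]
    rw [hMφ, AlgEquiv.symm_apply_apply, ← hMφ] at h1
    have h2 := congrArg (fun f : Module.End ℝ (Matrix (Fin n) (Fin n) ℝ) => f D) h1
    simp only [Module.End.mul_apply, LinearMap.sub_apply, Module.End.one_apply,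
      LinearMap.smul_apply] at h2
    exact sub_eq_iff_eq_add'.1 h2
  exact ⟨X, hXc, hX⟩

theorem exists_fixed {n : ℕ} (T : Module.End ℝ (Matrix (Fin n) (Fin n) ℝ))
    (hT : ∀ X, QPos X → QPos (T X))
    (hu : ∀ t ∈ Set.Icc (0 : ℝ) 1, IsUnit (1 - t • T))
    (D : Matrix (Fin n) (Fin n) ℝ) (δ : ℝ) (hδ : 0 < δ)
    (hD : ∀ v : Fin n → ℝ, δ * (v ⬝ᵥ v) ≤ v ⬝ᵥ (D *ᵥ v)) :
    ∃ X, X = T X + D ∧ QPos X := by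
  obtain ⟨X, hXc, hX⟩ := exists_curve T hu D
  have hmem : Set.Icc (0 : ℝ) 1 ⊆ {t | QPos (X t)} := by
    have hcl : IsClosed ({t | QPos (X t)} ∩ Set.Icc (0 : ℝ) 1) := by
      have hc : IsClosed {Y : Matrix (Fin n) (Fin n) ℝ | QPos Y} := by
        simp only [QPos, Set.ofPred_forall]
        refine isClosed_iInter fun v => isClosed_le continuous_const ?_
        simp only [dotProduct, mulVec]; fun_prop
      have := hXc.preimage_isClosed_of_isClosed isClosed_Icc hc
      rwa [Set.inter_comm] at this
    refine hcl.Icc_subset_of_forall_mem_nhdsWithin ?_ ?_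
    · have h0 : X 0 = D := by simpa using hX 0 (by simp)
      change QPos (X 0)
      rw [h0]
      intro v
      refine le_trans (mul_nonneg hδ.le ?_) (hD v)
      exact Finset.sum_nonneg fun i _ => mul_self_nonneg _
    · rintro t ⟨htQ, ht⟩
      have htI : t ∈ Set.Icc (0 : ℝ) 1 := ⟨ht.1, ht.2.le⟩
      have hlow : ∀ v : Fin n → ℝ, δ * (v ⬝ᵥ v) ≤ v ⬝ᵥ (X t *ᵥ v) := fun v => by
        rw [hX t htI, add_mulVec, dotProduct_add, smul_mulVec, dotProduct_smul, smul_eq_mul]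
        have := mul_nonneg ht.1 (hT _ htQ v)
        linarith [hD v]
      have hct : Tendsto X (𝓝[>] t) (𝓝 (X t)) := by
        refine (hXc t htI).mono_left ?_
        have : Set.Icc (0:ℝ) 1 ∈ 𝓝[>] t :=
          mem_of_superset (Ioc_mem_nhdsGT ht.2) fun s hs => ⟨ht.1.trans hs.1.le, hs.2⟩
        exact nhdsWithin_le_of_mem this
      have hg : Continuous fun Y : Matrix (Fin n) (Fin n) ℝ => ∑ i, ∑ j, |(Y - X t) i j| := by
        simp only [Matrix.sub_apply]; fun_prop
      have hlim := (hg.tendsto (X t)).comp hct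
      have hev := hlim.eventually_lt_const (u := δ) (by simpa using hδ)
      filter_upwards [hev] with s hs v
      have e : X s = X t + (X s - X t) := by abel
      rw [e, add_mulVec, dotProduct_add]
      have h1 := abs_le.1 (qf_bound (X s - X t) v)
      have h2 : (∑ i, ∑ j, |(X s - X t) i j|) * (v ⬝ᵥ v) ≤ δ * (v ⬝ᵥ v) :=
        mul_le_mul_of_nonneg_right (le_of_lt hs)
          (Finset.sum_nonneg fun i _ => mul_self_nonneg _)
      linarith [h1.1, hlow v]
  refine ⟨X 1, ?_, hmem (by simp)⟩
  simpa using hX 1 (by simp)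

theorem sandwich_apply {n : ℕ} (M X : Matrix (Fin n) (Fin n) ℝ) :
    sandwich M X = M * X * Mᵀ := by
  simp [sandwich, Matrix.mul_assoc]

theorem sandwich_qpos {n : ℕ} (M X : Matrix (Fin n) (Fin n) ℝ) (h : QPos X) :
    QPos (sandwich M X) := by
  intro v
  have := h (Mᵀ *ᵥ v)
  rw [sandwich_apply, ← mulVec_mulVec, ← mulVec_mulVec, dotProduct_mulVec, ← mulVec_transpose]
  exact this

theorem qpos_add {n : ℕ} {X Y : Matrix (Fin n) (Fin n) ℝ} (hX : QPos X) (hY : QPos Y) :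
    QPos (X + Y) := fun v => by
  rw [add_mulVec, dotProduct_add]; exact add_nonneg (hX v) (hY v)

theorem qpos_smul {n : ℕ} {X : Matrix (Fin n) (Fin n) ℝ} {c : ℝ} (hc : 0 ≤ c) (hX : QPos X) :
    QPos (c • X) := fun v => by
  rw [smul_mulVec, dotProduct_smul]; exact mul_nonneg hc (hX v)

theorem qpos_sum {n : ℕ} {ι : Type*} (s : Finset ι) (f : ι → Matrix (Fin n) (Fin n) ℝ)
    (h : ∀ i, QPos (f i)) : QPos (∑ i ∈ s, f i) :=
  Finset.sum_induction f QPos (fun _ _ => qpos_add) (fun v => by simp) (fun i _ => h i)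

theorem calT_apply {n m p q : ℕ}
    (A : Matrix (Fin n) (Fin n) ℝ) (A' : Fin p → Matrix (Fin n) (Fin n) ℝ)
    (B : Matrix (Fin n) (Fin m) ℝ) (B' : Fin q → Matrix (Fin n) (Fin m) ℝ)
    (al : Fin p → ℝ) (be : Fin q → ℝ) (L : Matrix (Fin m) (Fin n) ℝ)
    (X : Matrix (Fin n) (Fin n) ℝ) :
    calT A A' B B' al be L X = sandwich (A + B * L) X + ∑ i, al i • sandwich (A' i) X
      + ∑ j, be j • sandwich (B' j * L) X := by
  simp [calT]

theorem calTstar_apply {n m p q : ℕ}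
    (A : Matrix (Fin n) (Fin n) ℝ) (A' : Fin p → Matrix (Fin n) (Fin n) ℝ)
    (B : Matrix (Fin n) (Fin m) ℝ) (B' : Fin q → Matrix (Fin n) (Fin m) ℝ)
    (al : Fin p → ℝ) (be : Fin q → ℝ) (L : Matrix (Fin m) (Fin n) ℝ)
    (X : Matrix (Fin n) (Fin n) ℝ) :
    calTstar A A' B B' al be L X = sandwich (A + B * L)ᵀ X + ∑ i, al i • sandwich (A' i)ᵀ X
      + ∑ j, be j • sandwich (B' j * L)ᵀ X := by
  simp [calTstar]

theorem calT_qpos {n m p q : ℕ}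
    (A : Matrix (Fin n) (Fin n) ℝ) (A' : Fin p → Matrix (Fin n) (Fin n) ℝ)
    (B : Matrix (Fin n) (Fin m) ℝ) (B' : Fin q → Matrix (Fin n) (Fin m) ℝ)
    (al : Fin p → ℝ) (be : Fin q → ℝ) (hal : ∀ i, 0 ≤ al i) (hbe : ∀ j, 0 ≤ be j)
    (L : Matrix (Fin m) (Fin n) ℝ)
    (X : Matrix (Fin n) (Fin n) ℝ) (h : QPos X) : QPos (calT A A' B B' al be L X) := by
  rw [calT_apply]
  exact qpos_add (qpos_add (sandwich_qpos _ _ h)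
    (qpos_sum _ _ fun i => qpos_smul (hal i) (sandwich_qpos _ _ h)))
    (qpos_sum _ _ fun i => qpos_smul (hbe i) (sandwich_qpos _ _ h))

theorem sandwich_symm {n : ℕ} (M X : Matrix (Fin n) (Fin n) ℝ) (h : Xᵀ = X) :
    (sandwich M X)ᵀ = sandwich M X := by
  simp [sandwich_apply, h, Matrix.mul_assoc]

theorem calT_symm {n m p q : ℕ}
    (A : Matrix (Fin n) (Fin n) ℝ) (A' : Fin p → Matrix (Fin n) (Fin n) ℝ)
    (B : Matrix (Fin n) (Fin m) ℝ) (B' : Fin q → Matrix (Fin n) (Fin m) ℝ)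
    (al : Fin p → ℝ) (be : Fin q → ℝ) (L : Matrix (Fin m) (Fin n) ℝ)
    (X : Matrix (Fin n) (Fin n) ℝ) (h : Xᵀ = X) :
    (calT A A' B B' al be L X)ᵀ = calT A A' B B' al be L X := by
  simp [calT_apply, Matrix.transpose_sum, sandwich_symm _ _ h]

theorem sandwich_adj {n : ℕ} (M P X : Matrix (Fin n) (Fin n) ℝ) :
    (sandwich Mᵀ P * X).trace = (P * sandwich M X).trace := by
  rw [sandwich_apply, sandwich_apply, Matrix.transpose_transpose, Matrix.mul_assoc,
    Matrix.mul_assoc, Matrix.trace_mul_comm]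
  simp only [Matrix.mul_assoc]

theorem calT_adj {n m p q : ℕ}
    (A : Matrix (Fin n) (Fin n) ℝ) (A' : Fin p → Matrix (Fin n) (Fin n) ℝ)
    (B : Matrix (Fin n) (Fin m) ℝ) (B' : Fin q → Matrix (Fin n) (Fin m) ℝ)
    (al : Fin p → ℝ) (be : Fin q → ℝ) (L : Matrix (Fin m) (Fin n) ℝ)
    (P X : Matrix (Fin n) (Fin n) ℝ) :
    (calTstar A A' B B' al be L P * X).trace = (P * calT A A' B B' al be L X).trace := by
  simp only [calT_apply, calTstar_apply, Matrix.add_mul, Matrix.mul_add, Matrix.sum_mul,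
    Matrix.mul_sum, Matrix.trace_add, Matrix.trace_sum, Matrix.smul_mul, Matrix.mul_smul,
    Matrix.trace_smul, sandwich_adj]

theorem isUnit_of_radius {E : Type*} [AddCommGroup E] [Module ℝ E] (T : Module.End ℝ E)
    (h : spectralRadius ℝ T < 1) (t : ℝ) (ht : t ∈ Set.Icc (0 : ℝ) 1) : IsUnit (1 - t • T) := by
  rcases ht.1.eq_or_lt with h0 | h0
  · simp [← h0]
  have h1 : t⁻¹ ∈ resolventSet ℝ T := by
    apply spectrum.mem_resolventSet_of_spectralRadius_lt
    refine h.trans_le ?_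
    have : (1 : NNReal) ≤ ‖t⁻¹‖₊ := by
      rw [← NNReal.coe_le_coe]
      simp only [NNReal.coe_one, coe_nnnorm, Real.norm_eq_abs]
      rw [abs_of_pos (inv_pos.2 h0)]
      exact (one_le_inv₀ h0).2 ht.2
    exact_mod_cast this
  have h2 : IsUnit (algebraMap ℝ (Module.End ℝ E) t⁻¹ - T) := h1
  have h3 : IsUnit (algebraMap ℝ (Module.End ℝ E) t) := (IsUnit.mk0 t h0.ne').map _
  have h4 := h3.mul h2
  rwa [mul_sub, ← map_mul, mul_inv_cancel₀ h0.ne', map_one, ← Algebra.smul_def] at h4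

theorem entry_bound {n : ℕ} (X : Matrix (Fin n) (Fin n) ℝ) (h : QPos X) (hs : Xᵀ = X)
    (c : ℝ) (hc : ∀ v : Fin n → ℝ, v ⬝ᵥ (X *ᵥ v) ≤ c * (v ⬝ᵥ v)) (i j : Fin n) :
    |X i j| ≤ c := by
  have hd : ∀ i, X i i ≤ c := fun i => by
    have := hc (Pi.single i 1)
    simpa using this
  have hji : X j i = X i j := congrFun (congrFun hs i) j
  have h1 := h (Pi.single i 1 + Pi.single j 1)
  have h2 := h (Pi.single i 1 - Pi.single j 1)
  simp [mulVec_add, mulVec_sub, add_dotProduct, sub_dotProduct] at h1 h2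
  rw [abs_le]
  constructor <;> linarith [hd i, hd j]

theorem stmt3 {n m p q : ℕ} (hn : 0 < n) (hm : 0 < m)
    (A : Matrix (Fin n) (Fin n) ℝ) (A' : Fin p → Matrix (Fin n) (Fin n) ℝ)
    (B : Matrix (Fin n) (Fin m) ℝ) (B' : Fin q → Matrix (Fin n) (Fin m) ℝ)
    (al : Fin p → ℝ) (be : Fin q → ℝ) (hal : ∀ i, 0 ≤ al i) (hbe : ∀ j, 0 ≤ be j)
    (Q : Matrix (Fin n) (Fin n) ℝ) (hQ : Q.PosSemidef)
    (R : Matrix (Fin m) (Fin m) ℝ) (hR : R.PosDef)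
    (D : Matrix (Fin n) (Fin n) ℝ) (hD : D.PosDef)
    (L : Matrix (Fin m) (Fin n) ℝ)
    (hadm : Admissible A A' B B' al be L)
    (P : Matrix (Fin n) (Fin n) ℝ)
    (hP : P = calTstar A A' B B' al be L P + Q + Lᵀ * R * L)
    (S : ℕ → Matrix (Fin n) (Fin n) ℝ) (hS0 : (S 0).PosSemidef)
    (hrec : ∀ k, S (k + 1) = calT A A' B B' al be L (S k) + D) :
    Filter.Tendsto
      (fun N : ℕ => (N : ℝ)⁻¹ * ∑ k ∈ Finset.range N, ((Q + Lᵀ * R * L) * S k).trace)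
      Filter.atTop (nhds ((P * D).trace)) := by
  set T := calT A A' B B' al be L with hTdef
  have hTq : ∀ X, QPos X → QPos (T X) := calT_qpos A A' B B' al be hal hbe L
  obtain ⟨δ, hδ, hDδ⟩ := exists_delta D hD
  obtain ⟨X, hX, hXq⟩ := exists_fixed T hTq (isUnit_of_radius T hadm) D δ hδ hDδ
  have hvv : ∀ v : Fin n → ℝ, 0 ≤ v ⬝ᵥ v := fun v =>
    Finset.sum_nonneg fun i _ => mul_self_nonneg _
  have hDq : QPos D := fun v => (mul_nonneg hδ.le (hvv v)).trans (hDδ v)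
  have hXlow : ∀ v : Fin n → ℝ, δ * (v ⬝ᵥ v) ≤ v ⬝ᵥ (X *ᵥ v) := fun v => by
    rw [hX, add_mulVec, dotProduct_add]
    linarith [hDδ v, hTq X hXq v]
  -- symmetry and positivity of the covariances
  have hSs : ∀ k, (S k)ᵀ = S k := by
    intro k
    induction k with
    | zero => simpa [Matrix.IsHermitian] using hS0.isHermitian
    | succ k ih =>
      have hDs : Dᵀ = D := by simpa [Matrix.IsHermitian] using hD.isHermitian
      rw [hrec, Matrix.transpose_add, hDs, hTdef, calT_symm _ _ _ _ _ _ _ _ ih]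
  have hSq : ∀ k, QPos (S k) := by
    intro k
    induction k with
    | zero => exact fun v => by simpa using hS0.dotProduct_mulVec_nonneg v
    | succ k ih => rw [hrec]; exact qpos_add (hTq _ ih) hDq
  -- the comparison constant
  set a : ℝ := ∑ i, ∑ j, |S 0 i j| with ha
  have ha0 : 0 ≤ a := Finset.sum_nonneg fun i _ => Finset.sum_nonneg fun j _ => abs_nonneg _
  set c : ℝ := a / δ + 1 with hc
  have hc1 : 1 ≤ c := by
    have := div_nonneg ha0 hδ.le
    linarith
  have hcmp : ∀ k, QPos (c • X - S k) := by
    intro k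
    induction k with
    | zero =>
      intro v
      rw [sub_mulVec, dotProduct_sub, smul_mulVec, dotProduct_smul, smul_eq_mul]
      have h1 := (abs_le.1 (qf_bound (S 0) v)).2
      have h2 : a / δ * (δ * (v ⬝ᵥ v)) ≤ a / δ * (v ⬝ᵥ (X *ᵥ v)) :=
        mul_le_mul_of_nonneg_left (hXlow v) (div_nonneg ha0 hδ.le)
      have h3 : a / δ * (δ * (v ⬝ᵥ v)) = a * (v ⬝ᵥ v) := by field_simp
      have h4 := hXq v
      have h5 : c * (v ⬝ᵥ (X *ᵥ v)) = a / δ * (v ⬝ᵥ (X *ᵥ v)) + v ⬝ᵥ (X *ᵥ v) := by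
        rw [hc]; ring
      linarith
    | succ k ih =>
      have e : c • X - S (k + 1) = T (c • X - S k) + (c - 1) • D := by
        rw [hrec, map_sub, map_smul]
        conv_lhs => rw [hX]
        rw [smul_add, sub_smul, one_smul]
        abel
      rw [e]
      exact qpos_add (hTq _ ih) (qpos_smul (by linarith) hDq)
  set b : ℝ := c * ∑ i, ∑ j, |X i j| with hb
  have hent : ∀ k i j, |S k i j| ≤ b := by
    intro k i j
    refine entry_bound (S k) (hSq k) (hSs k) b (fun v => ?_) i j
    have h1 := hcmp k v
    rw [sub_mulVec, dotProduct_sub, smul_mulVec, dotProduct_smul, smul_eq_mul] at h1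
    have h2 := mul_le_mul_of_nonneg_left (abs_le.1 (qf_bound X v)).2 (by linarith : 0 ≤ c)
    rw [hb, mul_assoc]
    linarith
  have htr : ∀ k, |(P * S k).trace| ≤ ∑ i, ∑ j, |P i j| * b := by
    intro k
    simp only [Matrix.trace, Matrix.diag, Matrix.mul_apply]
    refine (Finset.abs_sum_le_sum_abs _ _).trans (Finset.sum_le_sum fun i _ => ?_)
    refine (Finset.abs_sum_le_sum_abs _ _).trans (Finset.sum_le_sum fun j _ => ?_)
    rw [abs_mul]
    exact mul_le_mul_of_nonneg_left (hent k j i) (abs_nonneg _)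
  -- telescoping
  have hstep : ∀ k, ((Q + Lᵀ * R * L) * S k).trace
      = (P * S k).trace - (P * S (k + 1)).trace + (P * D).trace := by
    intro k
    have h1 : Q + Lᵀ * R * L = P - calTstar A A' B B' al be L P := by
      rw [eq_sub_iff_add_eq]
      conv_rhs => rw [hP]
      abel
    rw [h1, Matrix.sub_mul, Matrix.trace_sub, calT_adj, hrec, Matrix.mul_add, Matrix.trace_add]
    ring
  have hsum : ∀ N : ℕ, ∑ k ∈ Finset.range N, ((Q + Lᵀ * R * L) * S k).trace
      = (P * S 0).trace - (P * S N).trace + N * (P * D).trace := by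
    intro N
    simp only [hstep, Finset.sum_add_distrib, Finset.sum_range_sub', Finset.sum_const,
      Finset.card_range, nsmul_eq_mul]
  have hlim0 : Tendsto (fun N : ℕ => (N : ℝ)⁻¹ * ((P * S 0).trace - (P * S N).trace))
      atTop (𝓝 0) := by
    refine Tendsto.zero_mul_isBoundedUnder_le tendsto_inv_atTop_nhds_zero_nat ?_
    refine isBoundedUnder_of ⟨|(P * S 0).trace| + ∑ i, ∑ j, |P i j| * b, fun N => ?_⟩
    simp only [Function.comp, Real.norm_eq_abs]
    exact (abs_sub _ _).trans (add_le_add le_rfl (htr N))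
  have hlim := hlim0.add_const (P * D).trace
  rw [zero_add] at hlim
  refine hlim.congr' ?_
  filter_upwards [eventually_gt_atTop 0] with N hN
  have hN' : (N : ℝ) ≠ 0 := by exact_mod_cast hN.ne'
  rw [hsum]
  field_simp
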